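/- arXiv:2507.01298 — 2 statements merged into one kernel-verified Lean document; each statement's English description precedes it below -/
import Mathlib

section
/- Let G be a connected port-labeled graph and let T be a spanning tree of G containing a vertex v that is incident to no port-1-incident edge of T. Let w be the neighbor of v with p_{vw} = 1, and let z be the neighbor of v on the unique path in T from v to w. Then the spanning tree T' obtained from T by deleting the edge {v, z} and adding the edge {v, w} satisfies: T' is a spanning tree of G, v is incident to a port-1-incident edge of T', and every vertex that was incident to a port-1-incident edge of T is still incident to a port-1-incident edge of T'. In particular, the number of vertices incident to a port-1-incident tree edge strictly increases. -/
/-!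
Write `T - e` for `T` without the edge `e = {v, z}`. The tree path from `v` to `w` starts with `e`,
and the rest of it avoids `v`, so `z` and `w` are joined in `T - e`. Hence adding `{v, w}`
reconnects the two components of `T - e` and creates no cycle. No edge of `T` at `v` is
port-1-incident; in particular `e` is not, so deleting it uncovers no vertex, while `{v, w}`
covers `v`.
-/

section EdgeExchange

open SimpleGraph

variable {V : Type*} {G H : SimpleGraph V} {a b c d u v : V}

theorem connected_of_forall_adj_reachable (hG : G.Connected)
    (h : ∀ ⦃x y⦄, G.Adj x y → H.Reachable x y) : H.Connected := by
  have := hG.nonempty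
  refine ⟨fun x y => ?_⟩
  obtain ⟨walk⟩ := hG.preconnected x y
  induction walk with
  | nil => rfl
  | cons hadj _ ih => exact (h hadj).trans ih

theorem reachable_deleteEdges_snd_of_isPath {P : G.Walk u v} (hP : P.IsPath) :
    (G.deleteEdges {s(u, P.snd)}).Reachable P.snd v := by
  cases P with
  | nil => rfl
  | cons hadj Q =>
    rw [Walk.snd_cons]
    have start_notMem : u ∉ Q.support := ((Walk.cons_isPath_iff hadj Q).1 hP).2
    exact reachable_deleteEdges_iff_exists_walk.2
      ⟨Q, fun hmem => start_notMem (Q.fst_mem_support_of_mem_edges hmem)⟩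

/-- The graph obtained from `G` by deleting the edge `e` and adding the edge `f`. As in
`SimpleGraph.fromEdgeSet`, nothing is added when `f` is a loop. -/
def exchangeEdge (G : SimpleGraph V) (e f : Sym2 V) : SimpleGraph V :=
  G.deleteEdges {e} ⊔ fromEdgeSet {f}

theorem exchangeEdge_le {e f : Sym2 V} (hGH : G ≤ H) (hf : f ∈ H.edgeSet) :
    exchangeEdge G e f ≤ H :=
  sup_le ((deleteEdges_le _).trans hGH) <| (fromEdgeSet_le H).2 <|
    Set.sdiff_subset.trans (Set.singleton_subset_iff.2 hf)

theorem exchangeEdge_adj_of_adj_of_ne {e f : Sym2 V} (hadj : G.Adj u v) (hne : s(u, v) ≠ e) :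
    (exchangeEdge G e f).Adj u v :=
  Or.inl (deleteEdges_adj.2 ⟨hadj, hne⟩)

theorem exchangeEdge_adj_of_ne {e : Sym2 V} (hne : u ≠ v) :
    (exchangeEdge G e s(u, v)).Adj u v :=
  Or.inr ⟨rfl, hne⟩

theorem connected_exchangeEdge {f : Sym2 V} (hG : G.Connected)
    (hab : (exchangeEdge G s(a, b) f).Reachable a b) :
    (exchangeEdge G s(a, b) f).Connected := by
  refine connected_of_forall_adj_reachable hG fun x y hadj => ?_
  by_cases hxy : s(x, y) = s(a, b)
  · rcases Sym2.eq_iff.1 hxy with ⟨rfl, rfl⟩ | ⟨rfl, rfl⟩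
    · exact hab
    · exact hab.symm
  · exact (exchangeEdge_adj_of_adj_of_ne hadj hxy).reachable

theorem reachable_exchangeEdge (hac : (G.deleteEdges {s(a, b)}).Reachable a c)
    (hbd : (G.deleteEdges {s(a, b)}).Reachable b d) :
    (exchangeEdge G s(a, b) s(c, d)).Reachable a b := by
  have hcd : (exchangeEdge G s(a, b) s(c, d)).Reachable c d := by
    rcases eq_or_ne c d with rfl | hne
    · rfl
    · exact (exchangeEdge_adj_of_ne hne).reachable
  exact ((hac.mono le_sup_left).trans hcd).trans (hbd.mono le_sup_left).symm

theorem isTree_exchangeEdge (hG : G.IsTree) (hab : G.Adj a b)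
    (hac : (G.deleteEdges {s(a, b)}).Reachable a c)
    (hbd : (G.deleteEdges {s(a, b)}).Reachable b d) :
    (exchangeEdge G s(a, b) s(c, d)).IsTree where
  connected := connected_exchangeEdge hG.connected (reachable_exchangeEdge hac hbd)
  isAcyclic := by
    have not_reachable_ab : ¬ (G.deleteEdges {s(a, b)}).Reachable a b :=
      isBridge_iff.1 (isAcyclic_iff_forall_adj_isBridge.1 hG.isAcyclic hab)
    have not_reachable_cd : ¬ (G.deleteEdges {s(a, b)}).Reachable c d :=
      fun hcd => not_reachable_ab ((hac.trans hcd).trans hbd.symm)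
    exact (hG.isAcyclic.anti (deleteEdges_le _)).sup_edge_of_not_reachable not_reachable_cd

end EdgeExchange

section Coverage

open SimpleGraph

variable {V : Type*} {M : Set (Sym2 V)} {G T : SimpleGraph V} {v w : V}

/-- The vertices incident to an edge of `G` that belongs to the set `M` of marked edges. -/
def coveredVertices (M : Set (Sym2 V)) (G : SimpleGraph V) : Set V :=
  {x | ∃ u, G.Adj x u ∧ s(x, u) ∈ M}

theorem coveredVertices_subset_exchangeEdge {e f : Sym2 V} (he : e ∉ M) :
    coveredVertices M G ⊆ coveredVertices M (exchangeEdge G e f) :=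
  fun _ ⟨u, hadj, hmem⟩ =>
    ⟨u, exchangeEdge_adj_of_adj_of_ne hadj (ne_of_mem_of_not_mem hmem he), hmem⟩

theorem mem_coveredVertices_exchangeEdge {e : Sym2 V} (hne : v ≠ w) (hM : s(v, w) ∈ M) :
    v ∈ coveredVertices M (exchangeEdge G e s(v, w)) :=
  ⟨w, exchangeEdge_adj_of_ne hne, hM⟩

theorem swap_improves_port_one_coverage_general (hTG : T ≤ G) (hT : T.IsTree)
    (hv : v ∉ coveredVertices M T) (hvw : G.Adj v w) (hM : s(v, w) ∈ M)
    {P : T.Walk v w} (hP : P.IsPath) :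
    exchangeEdge T s(v, P.snd) s(v, w) ≤ G ∧
      (exchangeEdge T s(v, P.snd) s(v, w)).IsTree ∧
      v ∈ coveredVertices M (exchangeEdge T s(v, P.snd) s(v, w)) ∧
      coveredVertices M T ⊂ coveredVertices M (exchangeEdge T s(v, P.snd) s(v, w)) := by
  have hadj : T.Adj v P.snd := P.adj_snd (Walk.not_nil_of_ne hvw.ne)
  have hunmarked : s(v, P.snd) ∉ M := fun hmem => hv ⟨P.snd, hadj, hmem⟩
  have hcovered := mem_coveredVertices_exchangeEdge (G := T) (e := s(v, P.snd)) hvw.ne hM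
  exact ⟨exchangeEdge_le hTG hvw,
    isTree_exchangeEdge hT hadj (Reachable.refl v) (reachable_deleteEdges_snd_of_isPath hP),
    hcovered,
    (Set.ssubset_iff_of_subset (coveredVertices_subset_exchangeEdge hunmarked)).2
      ⟨v, hcovered, hv⟩⟩

/-- The port-1-incident pairs of the port labeling `p`, where `p u v` is the port number at `u` of
the edge `{u, v}`. Pairs that are not edges carry junk labels, so this set is meant to be
intersected with an edge set. -/
def portOneEdges (p : V → V → ℕ) : Set (Sym2 V) :=
  Sym2.fromRel (r := fun u v => p u v = 1 ∨ p v u = 1) ⟨fun _ _ => Or.symm⟩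

end Coverage

/-- Let `G` be a connected port-labeled graph (on at least two
vertices) and `T` a spanning tree of `G` containing a vertex `v` incident to
no port-1-incident edge of `T`. Let `w` be the neighbor of `v` with
`p v w = 1`, and let `z` be the neighbor of `v` on the unique path in `T` from
`v` to `w`. Then `T' = T - {v,z} + {v,w}` is a spanning tree of `G`, `v` is
incident to a port-1-incident edge of `T'`, every vertex incident to a
port-1-incident edge of `T` is still incident to one in `T'`, and the number
of vertices incident to a port-1-incident tree edge strictly increases. -/
theorem swap_improves_port_one_coverage {V : Type*} [Fintype V]
    (G : SimpleGraph V) [DecidableRel G.Adj] (p : V → V → ℕ)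
    (hports : ∀ v : V, Set.BijOn (p v) (G.neighborSet v) (Set.Icc 1 (G.degree v)))
    (hG : G.Connected) (h2 : 2 ≤ Fintype.card V)
    (T : SimpleGraph V) (hTG : T ≤ G) (hT : T.IsTree)
    (v : V) (hv : ∀ u : V, T.Adj v u → ¬ (p v u = 1 ∨ p u v = 1))
    (w : V) (hw : G.Adj v w) (hpw : p v w = 1)
    (z : V) (P : T.Walk v w) (hP : P.IsPath) (hz : P.getVert 1 = z) :
    ((T.deleteEdges {s(v, z)}) ⊔ SimpleGraph.fromEdgeSet {s(v, w)}) ≤ G ∧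
    ((T.deleteEdges {s(v, z)}) ⊔ SimpleGraph.fromEdgeSet {s(v, w)}).IsTree ∧
    (∃ u : V, ((T.deleteEdges {s(v, z)}) ⊔ SimpleGraph.fromEdgeSet {s(v, w)}).Adj v u ∧
        (p v u = 1 ∨ p u v = 1)) ∧
    (∀ x : V, (∃ u : V, T.Adj x u ∧ (p x u = 1 ∨ p u x = 1)) →
        ∃ u : V, ((T.deleteEdges {s(v, z)}) ⊔ SimpleGraph.fromEdgeSet {s(v, w)}).Adj x u ∧
          (p x u = 1 ∨ p u x = 1)) ∧
    {x : V | ∃ u : V, T.Adj x u ∧ (p x u = 1 ∨ p u x = 1)}.ncard <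
      {x : V | ∃ u : V,
          ((T.deleteEdges {s(v, z)}) ⊔ SimpleGraph.fromEdgeSet {s(v, w)}).Adj x u ∧
          (p x u = 1 ∨ p u x = 1)}.ncard := by
  subst hz
  obtain ⟨hle, htree, hcovered, hssubset⟩ := swap_improves_port_one_coverage_general
    (M := portOneEdges p) hTG hT (fun ⟨u, hadj, hport⟩ => hv u hadj hport) hw (Or.inl hpw) hP
  exact ⟨hle, htree, hcovered, hssubset.subset, Set.ncard_lt_ncard hssubset⟩
end

section
/- Every connected port-labeled graph on n ≥ 2 vertices has at least one Port-One tree, i.e., a spanning tree T such that every vertex is incident to at least one edge of T that is port-1-incident. -/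
/-!
The port-1-incident edges form a subgraph `H` of `G`, and it has no isolated vertices because the
port-1 edge at each vertex belongs to it. A spanning forest of `H` still meets every vertex, since
a vertex which `H` joins to another one is joined to it by the forest. Extending this forest to a
spanning tree of `G` keeps its port-1-incident edges, so the tree is a Port-One tree.
-/

section Support

variable {V : Type*} {G H : SimpleGraph V}

theorem support_subset_support_of_reachable_le (h : G.Reachable ≤ H.Reachable) :
    G.support ⊆ H.support := by
  rintro v ⟨w, hvw⟩
  exact SimpleGraph.mem_support_of_reachable hvw.ne (h v w hvw.reachable)

theorem exists_isTree_le_support_subset_support_inf (hG : G.Connected) (hHG : H ≤ G) :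
    ∃ T ≤ G, T.IsTree ∧ H.support ⊆ (T ⊓ H).support := by
  obtain ⟨F, hFH, hF_acyclic, hF_reachable⟩ := H.exists_isAcyclic_reachable_eq_le
  obtain ⟨T, hFT, hTG, hT⟩ :=
    hG.exists_isTree_le_of_le_of_isAcyclic (hFH.trans hHG) hF_acyclic
  refine ⟨T, hTG, hT, ?_⟩
  calc
    H.support ⊆ F.support := support_subset_support_of_reachable_le hF_reachable.ge
    _ ⊆ (T ⊓ H).support := SimpleGraph.support_mono (le_inf hFT hFH)

end Support

section PortOne

variable {V : Type*} {G : SimpleGraph V} {p : V → V → ℕ}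

/-- The spanning subgraph of `G` formed by its port-1-incident edges, where `p v w` is the port
number at `v` of the edge `{v, w}`. Values of `p` on non-adjacent pairs are ignored. -/
def portOneGraph (G : SimpleGraph V) (p : V → V → ℕ) : SimpleGraph V where
  Adj v w := G.Adj v w ∧ (p v w = 1 ∨ p w v = 1)
  symm := ⟨fun _ _ h => ⟨h.1.symm, h.2.symm⟩⟩
  loopless := ⟨fun _ h => G.irrefl h.1⟩

theorem portOneGraph_le : portOneGraph G p ≤ G :=
  fun _ _ h => h.1

theorem mem_support_portOneGraph {v : V} [Fintype (G.neighborSet v)]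
    (hp : Set.SurjOn (p v) (G.neighborSet v) (Set.Icc 1 (G.degree v))) (hv : v ∈ G.support) :
    v ∈ (portOneGraph G p).support := by
  have one_le_degree : 1 ≤ G.degree v := (G.degree_pos_iff_mem_support v).mpr hv
  obtain ⟨w, hvw, hpvw⟩ := hp (Set.left_mem_Icc.mpr one_le_degree)
  exact ⟨w, hvw, .inl hpvw⟩

end PortOne

theorem p1tree_exists_general {V : Type*} [Nontrivial V] (G : SimpleGraph V) [G.LocallyFinite]
    (p : V → V → ℕ)
    (hports : ∀ v : V, Set.BijOn (p v) (G.neighborSet v) (Set.Icc 1 (G.degree v)))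
    (hG : G.Connected) :
    ∃ T : SimpleGraph V, T ≤ G ∧ T.IsTree ∧
      ∀ v : V, ∃ w : V, T.Adj v w ∧ (p v w = 1 ∨ p w v = 1) := by
  obtain ⟨T, hTG, hT, hsupport⟩ :=
    exists_isTree_le_support_subset_support_inf hG (portOneGraph_le (p := p))
  refine ⟨T, hTG, hT, fun v => ?_⟩
  have hv : v ∈ G.support := hG.preconnected.support_eq_univ ▸ Set.mem_univ v
  obtain ⟨w, hTvw, -, hpvw⟩ := hsupport (mem_support_portOneGraph (hports v).surjOn hv)
  exact ⟨w, hTvw, hpvw⟩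

/-- Every connected port-labeled graph on `n ≥ 2` vertices has at
least one Port-One tree, i.e., a spanning tree `T` (`T ≤ G`, connected and
acyclic on the full vertex set) such that every vertex is incident to at least
one edge of `T` that is port-1-incident (carries port 1 at one endpoint). -/
theorem p1tree_exists {V : Type*} [Fintype V] (G : SimpleGraph V)
    [DecidableRel G.Adj] (p : V → V → ℕ)
    (hports : ∀ v : V, Set.BijOn (p v) (G.neighborSet v) (Set.Icc 1 (G.degree v)))
    (hG : G.Connected) (h2 : 2 ≤ Fintype.card V) :
    ∃ T : SimpleGraph V, T ≤ G ∧ T.IsTree ∧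
      ∀ v : V, ∃ w : V, T.Adj v w ∧ (p v w = 1 ∨ p w v = 1) := by
  have : Nontrivial V := Fintype.one_lt_card_iff_nontrivial.mp h2
  exact p1tree_exists_general G p hports hG
end
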